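/- Convex Positivstellensatz: let f = f* ∈ M_d(ℂ⟨x⟩), let L = I + A₁x₁ + ⋯ + Aₙxₙ be a monic hermitian linear matrix pencil of size e, and set δ = ⌊(deg f)/2⌋. Then f(X) is positive semidefinite for every k ∈ ℕ and every X ∈ D_L(k) if and only if there exist finitely many s₁,…,s_M ∈ M_d(ℂ⟨x⟩) and v₁,…,v_N ∈ ℂ⟨x⟩^{e×d}, all of degree at most δ, such that f = Σ_{i=1}^M sᵢ*sᵢ + Σ_{j=1}^N vⱼ*Lvⱼ in M_d(ℂ⟨x⟩). -/

import Mathlib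

open scoped Kronecker Matrix ComplexOrder

/-- Noncommutative polynomials: the free `ℂ`-algebra `ℂ⟨x₁,…,xₙ⟩` on `n` generators. -/
abbrev FreeAlg (n : ℕ) := FreeAlgebra ℂ (Fin n)

/-- Evaluation of a matrix of noncommutative polynomials at an `n`-tuple of `k × k` complex
matrices, i.e. the image under `id ⊗ ev_X`. -/
noncomputable def evalM {n k : ℕ} {I J : Type*} (f : Matrix I J (FreeAlg n))
    (X : Fin n → Matrix (Fin k) (Fin k) ℂ) : Matrix (I × Fin k) (J × Fin k) ℂ :=
  fun p q => FreeAlgebra.lift ℂ X (f p.1 q.1) p.2 q.2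

/-- The conjugate-linear involutive anti-automorphism on `ℂ⟨x⟩` fixing the generators:
reverse each word and conjugate each coefficient. -/
noncomputable def nstar {n : ℕ} (a : FreeAlg n) : FreeAlg n :=
  (FreeAlgebra.equivMonoidAlgebraFreeMonoid).symm
    (MonoidAlgebra.ofCoeff <| Finsupp.mapDomain FreeMonoid.reverse
      (Finsupp.mapRange (starRingEnd ℂ) (map_zero _)
        ((FreeAlgebra.equivMonoidAlgebraFreeMonoid) a).coeff))

/-- Conjugate-transpose of a matrix over `ℂ⟨x⟩`. -/
noncomputable def adjM {n : ℕ} {I J : Type*} (f : Matrix I J (FreeAlg n)) :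
    Matrix J I (FreeAlg n) :=
  fun i j => nstar (f j i)

/-- A matrix `f` over `ℂ⟨x⟩` is hermitian if `f = f*`. -/
def IsHermPoly {n : ℕ} {I : Type*} (f : Matrix I I (FreeAlg n)) : Prop :=
  ∀ i j, f i j = nstar (f j i)

/-- Evaluation `L(X) = A₀ ⊗ I + ∑ⱼ Aⱼ ⊗ Xⱼ` of a linear matrix pencil at a matrix tuple. -/
noncomputable def pencilK {n d k : ℕ} (A0 : Matrix (Fin d) (Fin d) ℂ)
    (A : Fin n → Matrix (Fin d) (Fin d) ℂ) (X : Fin n → Matrix (Fin k) (Fin k) ℂ) :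
    Matrix (Fin d × Fin k) (Fin d × Fin k) ℂ :=
  A0 ⊗ₖ (1 : Matrix (Fin k) (Fin k) ℂ) + ∑ j, A j ⊗ₖ X j

/-- Evaluation `L(X) = I ⊗ I + ∑ⱼ Aⱼ ⊗ Xⱼ` of a monic linear matrix pencil. -/
noncomputable def monicK {n d k : ℕ} (A : Fin n → Matrix (Fin d) (Fin d) ℂ)
    (X : Fin n → Matrix (Fin k) (Fin k) ℂ) : Matrix (Fin d × Fin k) (Fin d × Fin k) ℂ :=
  1 + ∑ j, A j ⊗ₖ X j

/-- The monic pencil `I + ∑ⱼ Aⱼ xⱼ` as a matrix of noncommutative polynomials. -/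
noncomputable def monicPoly {n e : ℕ} (A : Fin n → Matrix (Fin e) (Fin e) ℂ) :
    Matrix (Fin e) (Fin e) (FreeAlg n) :=
  1 + ∑ j, (A j).map (fun c => c • FreeAlgebra.ι ℂ j)

/-- The subspace of noncommutative polynomials of degree at most `δ`:
the `ℂ`-linear span of products of at most `δ` generators. -/
noncomputable def degLE (n δ : ℕ) : Submodule ℂ (FreeAlg n) :=
  Submodule.span ℂ
    {a | ∃ w : List (Fin n), w.length ≤ δ ∧ a = (w.map (FreeAlgebra.ι ℂ)).prod}

/-- A matrix over `ℂ⟨x⟩` has degree at most `δ` if each entry does. -/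
def matDegLE {n : ℕ} {I J : Type*} (f : Matrix I J (FreeAlg n)) (δ : ℕ) : Prop :=
  ∀ i j, f i j ∈ degLE n δ

/-- The degree of a matrix of noncommutative polynomials: the least `δ` such that every entry
lies in the span of words of length at most `δ`. -/
noncomputable def matDeg {n : ℕ} {I J : Type*} (f : Matrix I J (FreeAlg n)) : ℕ :=
  sInf {δ | matDegLE f δ}

/-- Evaluation of `f` at the zero scalar tuple, `f(0) ∈ M_d(ℂ)`. -/
noncomputable def evalZero {n : ℕ} {I J : Type*} (f : Matrix I J (FreeAlg n)) :
    Matrix I J ℂ :=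
  f.map (⇑(FreeAlgebra.lift ℂ (fun _ : Fin n => (0 : ℂ))))

/-!
A nonzero polynomial of degree at most `m` stays nonzero at the truncated Fock tuple of creation
plus annihilation operators on words of length at most `m`, so identities of bounded degree can be
tested at a small multiple `Y` of it, at which `I ⊕ L` is positive definite. There the certificates
`∑ s*s + ∑ v*Lv` of degree at most `δ` form a closed cone in finitely many dimensions: a compact
base is given by the squares of norm one, which the trace bounds away from zero.

If `f(Y)` lies outside this cone, a separating functional may be chosen strictly positive on the
nonzero squares. The truncated GNS construction turns it into a tuple `X` of compressed
multiplication operators. As `L` is linear, positivity of the functional on the terms `v*Lv` gives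
`L(X) ⪰ 0`. A word of length at most `2δ + 1` splits as `u* x_k v` with `u` and `v` of length at
most `δ`, so compression does not alter the moments up to that degree, and the functional sends `f`
to `⟨f(X)ξ, ξ⟩ ≥ 0`, contradicting the separation.
-/

/-! ### Words and the involution -/

section Words

variable {n : ℕ}

/-- The word `x_{w₁} ⋯ x_{w_r}` as a noncommutative polynomial. -/
noncomputable def word (w : List (Fin n)) : FreeAlg n := (w.map (FreeAlgebra.ι ℂ)).prod

lemma word_nil : word ([] : List (Fin n)) = 1 := rfl

lemma word_singleton (j : Fin n) : word [j] = FreeAlgebra.ι ℂ j := List.prod_singleton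

lemma word_cons (j : Fin n) (w : List (Fin n)) : word (j :: w) = FreeAlgebra.ι ℂ j * word w :=
  List.prod_cons

lemma word_append (u v : List (Fin n)) : word (u ++ v) = word u * word v := by
  simp only [word, List.map_append, List.prod_append]

lemma equivMonoidAlgebraFreeMonoid_word (w : List (Fin n)) :
    FreeAlgebra.equivMonoidAlgebraFreeMonoid (word w) =
      MonoidAlgebra.single (FreeMonoid.ofList w) (1 : ℂ) := by
  induction w with
  | nil => rw [word_nil, map_one]; rfl
  | cons j w ih =>
    rw [word_cons, map_mul, ih]
    simp [FreeAlgebra.equivMonoidAlgebraFreeMonoid, MonoidAlgebra.single_mul_single]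

/-- The words as a `ℂ`-basis of the free algebra. -/
noncomputable def wordBasis (n : ℕ) : Module.Basis (List (Fin n)) ℂ (FreeAlg n) :=
  (FreeAlgebra.basisFreeMonoid ℂ (Fin n)).reindex FreeMonoid.toList

lemma coe_wordBasis : ⇑(wordBasis n) = word := by
  funext w
  rw [← FreeAlgebra.equivMonoidAlgebraFreeMonoid.injective.eq_iff,
    equivMonoidAlgebraFreeMonoid_word]
  simp [wordBasis, FreeAlgebra.basisFreeMonoid]

@[elab_as_elim]
lemma word_induction {P : FreeAlg n → Prop} (a : FreeAlg n) (word : ∀ w, P (word w))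
    (add : ∀ a b, P a → P b → P (a + b)) (smul : ∀ (c : ℂ) a, P a → P (c • a)) : P a := by
  have ha : a ∈ Submodule.span ℂ (Set.range (wordBasis n)) := by
    rw [(wordBasis n).span_eq]; trivial
  induction ha using Submodule.span_induction with
  | mem _ h => obtain ⟨w, rfl⟩ := h; rw [coe_wordBasis]; exact word w
  | zero => simpa using smul 0 _ (word [])
  | add a b _ _ ha hb => exact add a b ha hb
  | smul c a _ ha => exact smul c a ha

lemma nstar_add (a b : FreeAlg n) : nstar (a + b) = nstar a + nstar b := by
  rw [nstar, map_add, MonoidAlgebra.coeff_add, Finsupp.mapRange_add (map_add _),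
    Finsupp.mapDomain_add, MonoidAlgebra.ofCoeff_add, map_add]
  rfl

lemma nstar_smul (c : ℂ) (a : FreeAlg n) : nstar (c • a) = starRingEnd ℂ c • nstar a := by
  rw [nstar, map_smul, MonoidAlgebra.coeff_smul,
    Finsupp.mapRange_smul' (c := c) (d := starRingEnd ℂ c) _ (map_mul _ c), Finsupp.mapDomain_smul,
    MonoidAlgebra.ofCoeff_smul, map_smul]
  rfl

lemma nstar_word (w : List (Fin n)) : nstar (word w) = word w.reverse := by
  rw [nstar, AlgEquiv.symm_apply_eq, equivMonoidAlgebraFreeMonoid_word,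
    equivMonoidAlgebraFreeMonoid_word, MonoidAlgebra.coeff_single, Finsupp.mapRange_single,
    Finsupp.mapDomain_single, map_one]
  rfl

/-- The involution `nstar` as a conjugate-linear map. -/
noncomputable def nstarLinear (n : ℕ) : FreeAlg n →ₗ⋆[ℂ] FreeAlg n where
  toFun := nstar
  map_add' := nstar_add
  map_smul' := nstar_smul

lemma nstar_zero : nstar (0 : FreeAlg n) = 0 := map_zero (nstarLinear n)

lemma nstar_sum {ι : Type*} (s : Finset ι) (a : ι → FreeAlg n) :
    nstar (∑ i ∈ s, a i) = ∑ i ∈ s, nstar (a i) :=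
  map_sum (nstarLinear n) a s

lemma nstar_mul (a b : FreeAlg n) : nstar (a * b) = nstar b * nstar a := by
  induction a using word_induction with
  | word u =>
    induction b using word_induction with
    | word v => rw [← word_append, nstar_word, nstar_word, nstar_word, ← word_append,
        List.reverse_append]
    | add a b ha hb => rw [mul_add, nstar_add, ha, hb, nstar_add, add_mul]
    | smul c a ha => rw [mul_smul_comm, nstar_smul, ha, nstar_smul, smul_mul_assoc]
  | add a b ha hb => rw [add_mul, nstar_add, ha, hb, nstar_add, mul_add]
  | smul c a ha => rw [smul_mul_assoc, nstar_smul, ha, nstar_smul, mul_smul_comm]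

lemma nstar_nstar (a : FreeAlg n) : nstar (nstar a) = a := by
  induction a using word_induction with
  | word w => rw [nstar_word, nstar_word, List.reverse_reverse]
  | add a b ha hb => rw [nstar_add, nstar_add, ha, hb]
  | smul c a ha => rw [nstar_smul, nstar_smul, ha, Complex.conj_conj]

lemma nstar_ι (j : Fin n) : nstar (FreeAlgebra.ι ℂ j) = FreeAlgebra.ι ℂ j := by
  rw [← word_singleton, nstar_word, List.reverse_singleton]

lemma nstar_one : nstar (1 : FreeAlg n) = 1 := by
  rw [← word_nil, nstar_word, List.reverse_nil]

end Words

/-! ### Degrees -/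

section Degree

variable {n : ℕ} {I J K : Type*}

lemma word_mem_degLE {w : List (Fin n)} {δ : ℕ} (h : w.length ≤ δ) : word w ∈ degLE n δ :=
  Submodule.subset_span ⟨w, h, rfl⟩

lemma degLE_eq_span_word (n δ : ℕ) : degLE n δ = Submodule.span ℂ (word '' {w | w.length ≤ δ}) := by
  rw [degLE]
  congr 1
  ext a
  exact exists_congr fun w => and_congr_right fun _ => eq_comm

lemma mem_degLE_iff {a : FreeAlg n} {δ : ℕ} :
    a ∈ degLE n δ ↔ ∀ w ∈ ((wordBasis n).repr a).support, w.length ≤ δ := by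
  rw [degLE_eq_span_word, ← coe_wordBasis, (wordBasis n).mem_span_image]
  rfl

lemma degLE_mono {δ ε : ℕ} (h : δ ≤ ε) : degLE n δ ≤ degLE n ε :=
  Submodule.span_mono fun _ ⟨w, hw, ha⟩ => ⟨w, hw.trans h, ha⟩

lemma exists_mem_degLE (a : FreeAlg n) : ∃ δ, a ∈ degLE n δ :=
  ⟨((wordBasis n).repr a).support.sup List.length,
    mem_degLE_iff.2 fun _ hw => Finset.le_sup (f := List.length) hw⟩

lemma mul_mem_degLE {a b : FreeAlg n} {δ ε : ℕ} (ha : a ∈ degLE n δ) (hb : b ∈ degLE n ε) :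
    a * b ∈ degLE n (δ + ε) := by
  have hab := Submodule.mul_mem_mul ha hb
  rw [degLE, degLE, Submodule.span_mul_span] at hab
  refine Submodule.span_mono ?_ hab
  rintro _ ⟨_, ⟨u, hu, rfl⟩, _, ⟨v, hv, rfl⟩, rfl⟩
  exact ⟨u ++ v, List.length_append.trans_le (add_le_add hu hv), (word_append u v).symm⟩

lemma nstar_mem_degLE {a : FreeAlg n} {δ : ℕ} (ha : a ∈ degLE n δ) : nstar a ∈ degLE n δ := by
  suffices degLE n δ ≤ (degLE n δ).comap (nstarLinear n) from this ha
  refine Submodule.span_le.2 ?_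
  rintro _ ⟨w, hw, rfl⟩
  change nstar (word w) ∈ degLE n δ
  rw [nstar_word]
  exact word_mem_degLE (w.length_reverse.trans_le hw)

lemma matDegLE.mono {f : Matrix I J (FreeAlg n)} {δ ε : ℕ} (hf : matDegLE f δ) (h : δ ≤ ε) :
    matDegLE f ε :=
  fun i j => degLE_mono h (hf i j)

lemma matDegLE.mul [Fintype J] {f : Matrix I J (FreeAlg n)} {g : Matrix J K (FreeAlg n)}
    {δ ε : ℕ} (hf : matDegLE f δ) (hg : matDegLE g ε) : matDegLE (f * g) (δ + ε) :=
  fun i k => sum_mem fun j _ => mul_mem_degLE (hf i j) (hg j k)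

lemma matDegLE.adjM {f : Matrix I J (FreeAlg n)} {δ : ℕ} (hf : matDegLE f δ) :
    matDegLE (adjM f) δ :=
  fun i j => nstar_mem_degLE (hf j i)

lemma matDegLE_matDeg [Finite I] [Finite J] (f : Matrix I J (FreeAlg n)) :
    matDegLE f (matDeg f) := by
  cases nonempty_fintype I
  cases nonempty_fintype J
  choose δ hδ using fun i j => exists_mem_degLE (f i j)
  refine Nat.sInf_mem (s := {δ | matDegLE f δ}) ⟨∑ i, ∑ j, δ i j, fun i j => degLE_mono ?_ (hδ i j)⟩
  exact (Finset.single_le_sum (f := δ i) (fun _ _ => Nat.zero_le _) (Finset.mem_univ j)).trans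
    (Finset.single_le_sum (f := fun i => ∑ j, δ i j) (fun _ _ => Nat.zero_le _) (Finset.mem_univ i))

end Degree

/-! ### Evaluations and linear pencils -/

section Evaluation

variable {n : ℕ} {I J K L M E : Type*}

/-- The linear map `id ⊗ φ` on matrices with entries in `V`, where `φ` takes matrix values. Both
evaluations at matrix tuples and localizing matrices of functionals are of this form. -/
def blockMap {V : Type*} [AddCommMonoid V] [Module ℂ V] (φ : V →ₗ[ℂ] Matrix K L ℂ) :
    Matrix I J V →ₗ[ℂ] Matrix (I × K) (J × L) ℂ where
  toFun f := .of fun p q => φ (f p.1 q.1) p.2 q.2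
  map_add' f g := by ext; simp
  map_smul' c f := by ext; simp

/-- Evaluation of matrices over `ℂ⟨x⟩` at a tuple of matrices with an arbitrary index type; for
tuples indexed by `Fin k` this is `evalM`. -/
noncomputable def evalAt [Fintype K] [DecidableEq K] (X : Fin n → Matrix K K ℂ) :
    Matrix I J (FreeAlg n) →ₗ[ℂ] Matrix (I × K) (J × K) ℂ :=
  blockMap (FreeAlgebra.lift ℂ X).toLinearMap

/-- The monic linear pencil `I + ∑ⱼ Aⱼ xⱼ` with an arbitrary index type, as for `monicPoly`. -/
noncomputable def pencil [DecidableEq E] (A : Fin n → Matrix E E ℂ) : Matrix E E (FreeAlg n) :=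
  1 + ∑ j, (A j).map (· • FreeAlgebra.ι ℂ j)

/-- The value `I ⊗ G + ∑ⱼ Aⱼ ⊗ Bⱼ` of the homogenized pencil at the tuple `(G, B)`. -/
noncomputable def linearPencil [DecidableEq E] (A : Fin n → Matrix E E ℂ) (G : Matrix K K ℂ)
    (B : Fin n → Matrix K K ℂ) : Matrix (E × K) (E × K) ℂ :=
  1 ⊗ₖ G + ∑ j, A j ⊗ₖ B j

/-- The coefficients `0 ⊕ Aⱼ` of the monic pencil `I ⊕ L`, whose weighted squares
`(s ⊕ v)* (I ⊕ L) (s ⊕ v)` are exactly the terms `s*s + v*Lv`. -/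
def augment (I : Type*) (A : Fin n → Matrix E E ℂ) (j : Fin n) : Matrix (I ⊕ E) (I ⊕ E) ℂ :=
  Matrix.fromBlocks 0 0 0 (A j)

lemma isHermitian_augment (I : Type*) {A : Fin n → Matrix E E ℂ}
    (hA : ∀ j, (A j).IsHermitian) (j : Fin n) : (augment I A j).IsHermitian :=
  Matrix.IsHermitian.fromBlocks Matrix.isHermitian_zero (by simp) (hA j)

lemma blockMap_adjM {φ : FreeAlg n →ₗ[ℂ] Matrix K K ℂ} (hφ : ∀ a, φ (nstar a) = (φ a)ᴴ)
    (f : Matrix I J (FreeAlg n)) : blockMap φ (adjM f) = (blockMap φ f)ᴴ := by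
  ext p q
  exact congr($(hφ _) p.2 q.2)

section evalAt

variable [Fintype K] [DecidableEq K] {X : Fin n → Matrix K K ℂ}

lemma evalAt_apply (f : Matrix I J (FreeAlg n)) (p : I × K) (q : J × K) :
    evalAt X f p q = FreeAlgebra.lift ℂ X (f p.1 q.1) p.2 q.2 :=
  rfl

lemma evalAt_mul [Fintype J] (f : Matrix I J (FreeAlg n)) (g : Matrix J M (FreeAlg n)) :
    evalAt X (f * g) = evalAt X f * evalAt X g := by
  ext p q
  simp only [evalAt_apply, Matrix.mul_apply, map_sum, map_mul, Matrix.sum_apply,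
    Fintype.sum_prod_type]

lemma lift_nstar (hX : ∀ j, (X j).IsHermitian) (a : FreeAlg n) :
    FreeAlgebra.lift ℂ X (nstar a) = (FreeAlgebra.lift ℂ X a)ᴴ := by
  induction a using FreeAlgebra.induction with
  | grade0 c => simp [Algebra.algebraMap_eq_smul_one, nstar_smul, nstar_one]
  | grade1 j => rw [nstar_ι, FreeAlgebra.lift_ι_apply, hX j]
  | mul a b ha hb => rw [nstar_mul, map_mul, map_mul, Matrix.conjTranspose_mul, ha, hb]
  | add a b ha hb => rw [nstar_add, map_add, map_add, Matrix.conjTranspose_add, ha, hb]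

lemma evalAt_adjM (hX : ∀ j, (X j).IsHermitian) (f : Matrix I J (FreeAlg n)) :
    evalAt X (adjM f) = (evalAt X f)ᴴ :=
  blockMap_adjM (lift_nstar hX) f

lemma lift_submatrix {k : Type*} [Fintype k] [DecidableEq k] (X : Fin n → Matrix K K ℂ) (σ : k ≃ K)
    (a : FreeAlg n) : FreeAlgebra.lift ℂ (fun j => (X j).submatrix σ σ) a =
      (FreeAlgebra.lift ℂ X a).submatrix σ σ := by
  have h : FreeAlgebra.lift ℂ (fun j => (X j).submatrix σ σ) =
      (Matrix.reindexAlgEquiv ℂ ℂ σ.symm).toAlgHom.comp (FreeAlgebra.lift ℂ X) :=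
    FreeAlgebra.hom_ext <| funext fun j => by simp
  exact congr($h a)

lemma evalAt_submatrix {k : Type*} [Fintype k] [DecidableEq k] (X : Fin n → Matrix K K ℂ)
    (σ : k ≃ K) (f : Matrix I J (FreeAlg n)) : evalAt (fun j => (X j).submatrix σ σ) f =
      (evalAt X f).submatrix (Prod.map id σ) (Prod.map id σ) := by
  ext p q
  rw [evalAt_apply, lift_submatrix]
  rfl

lemma posSemidef_evalAt_of_forall_fin {f : Matrix I I (FreeAlg n)} {P : Matrix E E (FreeAlg n)}
    (h : ∀ (k : ℕ) (X : Fin n → Matrix (Fin k) (Fin k) ℂ), (∀ j, (X j).IsHermitian) →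
      (evalAt X P).PosSemidef → (evalAt X f).PosSemidef)
    (hX : ∀ j, (X j).IsHermitian) (hP : (evalAt X P).PosSemidef) : (evalAt X f).PosSemidef := by
  let σ := (Fintype.equivFin K).symm
  have hf : (evalAt (fun j => (X j).submatrix σ σ) f).PosSemidef := by
    refine h _ _ (fun j => (hX j).submatrix σ) ?_
    rw [evalAt_submatrix]
    exact hP.submatrix _
  rw [evalAt_submatrix] at hf
  exact (Matrix.posSemidef_submatrix_equiv (Equiv.prodCongr (Equiv.refl I) σ)).1 hf

end evalAt

section pencil

variable [DecidableEq E] {A : Fin n → Matrix E E ℂ}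

lemma blockMap_pencil (φ : FreeAlg n →ₗ[ℂ] Matrix K K ℂ) :
    blockMap φ (pencil A) = linearPencil A (φ 1) fun j => φ (FreeAlgebra.ι ℂ j) := by
  ext p q
  by_cases h : p.1 = q.1 <;>
    simp [blockMap, pencil, linearPencil, Matrix.one_apply, Matrix.sum_apply, h]

lemma evalAt_pencil [Fintype K] [DecidableEq K] (X : Fin n → Matrix K K ℂ) :
    evalAt X (pencil A) = linearPencil A 1 X := by
  simp only [evalAt, blockMap_pencil, AlgHom.toLinearMap_apply, map_one, FreeAlgebra.lift_ι_apply]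

lemma monicK_eq_evalM_pencil {d k : ℕ} (A : Fin n → Matrix (Fin d) (Fin d) ℂ)
    (X : Fin n → Matrix (Fin k) (Fin k) ℂ) : monicK A X = evalM (pencil A) X := by
  change _ = evalAt X (pencil A)
  rw [evalAt_pencil, linearPencil, Matrix.one_kronecker_one, monicK]

lemma linearPencil_conj [Fintype E] [Fintype K] (G : Matrix K K ℂ)
    (B : Fin n → Matrix K K ℂ) (C : Matrix K L ℂ) :
    linearPencil A (Cᴴ * G * C) (fun j => Cᴴ * B j * C) =
      ((1 : Matrix E E ℂ) ⊗ₖ C)ᴴ * linearPencil A G B * ((1 : Matrix E E ℂ) ⊗ₖ C) := by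
  simp only [linearPencil, Matrix.conjTranspose_kronecker, Matrix.conjTranspose_one,
    Matrix.mul_add, Matrix.add_mul, Matrix.mul_sum, Matrix.sum_mul, ← Matrix.mul_kronecker_mul,
    Matrix.one_mul, Matrix.mul_one]

lemma adjM_pencil (hA : ∀ j, (A j).IsHermitian) : adjM (pencil A) = pencil A := by
  ext a b
  simp only [adjM, pencil, Matrix.add_apply, Matrix.sum_apply, Matrix.map_apply, nstar_add,
    nstar_sum, nstar_smul, nstar_ι, Matrix.one_apply, eq_comm (a := a), apply_ite nstar, nstar_one,
    nstar_zero, starRingEnd_apply, (hA _).apply]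

lemma matDegLE_pencil (A : Fin n → Matrix E E ℂ) : matDegLE (pencil A) 1 := by
  intro a b
  rw [pencil, Matrix.add_apply, Matrix.sum_apply]
  refine add_mem ?_ (sum_mem fun j _ => Submodule.smul_mem _ _ ?_)
  · rw [Matrix.one_apply]
    split_ifs
    · exact word_mem_degLE (w := []) zero_le_one
    · exact zero_mem _
  · rw [← word_singleton]
    exact word_mem_degLE le_rfl

variable [DecidableEq I]

lemma pencil_augment (A : Fin n → Matrix E E ℂ) :
    pencil (augment I A) = Matrix.fromBlocks 1 0 0 (pencil A) := by
  ext (a | a) (b | b) <;> simp [pencil, augment, Matrix.sum_apply, Matrix.one_apply]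

lemma adjM_mul_pencil_augment_mul [Fintype I] [Fintype E] (w : Matrix (I ⊕ E) J (FreeAlg n)) :
    adjM w * pencil (augment I A) * w =
      adjM w.toRows₁ * w.toRows₁ + adjM w.toRows₂ * pencil A * w.toRows₂ := by
  have hw : adjM w = Matrix.fromCols (adjM w.toRows₁) (adjM w.toRows₂) := by
    ext a (b | b) <;> rfl
  rw [pencil_augment, hw, ← Matrix.fromRows_toRows w, Matrix.fromCols_mul_fromBlocks,
    Matrix.fromCols_mul_fromRows]
  simp

lemma linearPencil_augment_inl (G : Matrix K K ℂ) (B : Fin n → Matrix K K ℂ) (i : I) :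
    (linearPencil (augment I A) G B).submatrix (Prod.mk (.inl i)) (Prod.mk (.inl i)) = G := by
  ext p q
  simp [linearPencil, augment, Matrix.sum_apply]

lemma linearPencil_augment_inr (G : Matrix K K ℂ) (B : Fin n → Matrix K K ℂ) :
    (linearPencil (augment I A) G B).submatrix (Prod.map .inr id) (Prod.map .inr id) =
      linearPencil A G B := by
  ext p q
  simp [linearPencil, augment, Matrix.sum_apply, Matrix.one_apply]

end pencil

end Evaluation

/-! ### The truncated Fock tuple -/

section Fock

variable {n m : ℕ}

/-- The words of length at most `m`, indexing the truncated Fock space. -/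
abbrev Words (n m : ℕ) := {w : List (Fin n) // w.length ≤ m}

noncomputable instance : Fintype (Words n m) := (List.finite_length_le (Fin n) m).fintype

/-- The empty word. -/
def emptyWord : Words n m := ⟨[], Nat.zero_le m⟩

/-- Creation plus annihilation operators on the truncated Fock space. -/
noncomputable def fockTuple (n m : ℕ) (j : Fin n) : Matrix (Words n m) (Words n m) ℂ :=
  .of fun u v => if u.1 = j :: v.1 ∨ v.1 = j :: u.1 then 1 else 0

lemma isHermitian_fockTuple (j : Fin n) : (fockTuple n m j).IsHermitian := by
  ext u v
  simp [fockTuple, or_comm, apply_ite star]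

-- Annihilation cannot contribute here: reaching `u` from `∅` in `|w| ≤ |u|` steps needs
-- a creation at every step.
lemma lift_fockTuple_word_apply (w : List (Fin n)) (u : Words n m) (h : w.length ≤ u.1.length) :
    FreeAlgebra.lift ℂ (fockTuple n m) (word w) u emptyWord = if u.1 = w then 1 else 0 := by
  induction w generalizing u with
  | nil => simp [word_nil, Matrix.one_apply, emptyWord, Subtype.ext_iff]
  | cons j w ih =>
    have hw : w.length + 1 ≤ u.1.length := h
    rw [word_cons, map_mul, FreeAlgebra.lift_ι_apply, Matrix.mul_apply,
      Finset.sum_eq_single ⟨w, by omega⟩]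
    · rw [ih _ le_rfl]
      have hne : w ≠ j :: u.1 := fun h' => by
        have := congrArg List.length h'
        simp only [List.length_cons] at this
        omega
      simp [fockTuple, hne]
    · intro v _ hv
      by_cases hvu : u.1 = j :: v.1 ∨ v.1 = j :: u.1
      · have hlen : w.length ≤ v.1.length := by
          rcases hvu with h' | h' <;> have := congrArg List.length h' <;>
            simp only [List.length_cons] at this <;> omega
        rw [ih v hlen, if_neg fun h' => hv (Subtype.ext h'), mul_zero]
      · simp [fockTuple, hvu]
    · simp

lemma lift_smul_word {R : Type*} [Semiring R] [Algebra ℂ R] (t : ℂ) (X : Fin n → R)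
    (w : List (Fin n)) : FreeAlgebra.lift ℂ (fun j => t • X j) (word w) =
      t ^ w.length • FreeAlgebra.lift ℂ X (word w) := by
  induction w with
  | nil => simp [word_nil]
  | cons j w ih => simp only [word_cons, map_mul, FreeAlgebra.lift_ι_apply, ih,
      smul_mul_smul_comm, List.length_cons, pow_succ']

lemma eq_zero_of_lift_smul_fockTuple {t : ℂ} (ht : t ≠ 0) {a : FreeAlg n} (ha : a ∈ degLE n m)
    (h : FreeAlgebra.lift ℂ (fun j => t • fockTuple n m j) a = 0) : a = 0 := by
  let c := (wordBasis n).repr a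
  by_contra hne
  obtain ⟨w, hw, hmax⟩ := c.support.exists_max_image List.length
    (Finsupp.support_nonempty_iff.2 ((wordBasis n).repr.map_ne_zero_iff.2 hne))
  let u : Words n m := ⟨w, mem_degLE_iff.1 ha w hw⟩
  have hentry : FreeAlgebra.lift ℂ (fun j => t • fockTuple n m j) a u emptyWord =
      c w * t ^ w.length := by
    rw [← (wordBasis n).linearCombination_repr a, Finsupp.linearCombination_apply, Finsupp.sum,
      map_sum, Matrix.sum_apply, Finset.sum_eq_single_of_mem w hw]
    · simp [coe_wordBasis, lift_smul_word, lift_fockTuple_word_apply w u le_rfl, u, c]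
    · intro v hv hvw
      simp [coe_wordBasis, lift_smul_word, lift_fockTuple_word_apply v u (hmax v hv), u, hvw.symm]
  rw [h, Matrix.zero_apply, eq_comm] at hentry
  exact mul_ne_zero (Finsupp.mem_support_iff.1 hw) (pow_ne_zero _ ht) hentry

lemma evalAt_smul_fockTuple_injOn {t : ℂ} (ht : t ≠ 0) (I J : Type*) :
    Set.InjOn (evalAt (I := I) (J := J) fun j => t • fockTuple n m j) {f | matDegLE f m} := by
  intro f hf g hg hfg
  ext i j
  refine sub_eq_zero.1 (eq_zero_of_lift_smul_fockTuple ht (sub_mem (hf i j) (hg i j)) ?_)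
  ext p q
  rw [map_sub, Matrix.sub_apply]
  exact sub_eq_zero.2 congr($hfg (i, p) (j, q))

open scoped MatrixOrder Matrix.Norms.L2Operator in
lemma exists_pos_posDef_one_add_smul {K : Type*} [Finite K] [DecidableEq K] {H : Matrix K K ℂ}
    (hH : H.IsHermitian) : ∃ t : ℝ, 0 < t ∧ (1 + (t : ℂ) • H).PosDef := by
  cases nonempty_fintype K
  let t : ℝ := (‖H‖ + 1)⁻¹
  have ht : 0 < t := by positivity
  refine ⟨t, ht, ?_⟩
  have hle : (algebraMap ℝ (Matrix K K ℂ) ‖H‖ + H).PosSemidef := by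
    rw [← Matrix.nonneg_iff_posSemidef, ← neg_le_iff_add_nonneg']
    exact IsSelfAdjoint.neg_algebraMap_norm_le_self
  have hpos := (Matrix.PosDef.one.add_posSemidef hle).smul ht
  convert hpos using 1
  have hscale : t * (‖H‖ + 1) = 1 := inv_mul_cancel₀ (by positivity)
  rw [Algebra.algebraMap_eq_smul_one, ← add_assoc, smul_add, ← one_smul ℝ (1 : Matrix K K ℂ),
    smul_smul, ← add_smul, smul_smul, mul_one, add_comm 1, hscale]
  rfl

lemma exists_pos_posDef_evalAt_smul_pencil {E K : Type*} [Finite E] [DecidableEq E] [Fintype K]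
    [DecidableEq K] {A : Fin n → Matrix E E ℂ} (hA : ∀ j, (A j).IsHermitian)
    {X : Fin n → Matrix K K ℂ} (hX : ∀ j, (X j).IsHermitian) :
    ∃ t : ℝ, 0 < t ∧ (evalAt (fun j => (t : ℂ) • X j) (pencil A)).PosDef := by
  have hH : (∑ j, A j ⊗ₖ X j).IsHermitian := by
    simp only [Matrix.IsHermitian, Matrix.conjTranspose_sum, Matrix.conjTranspose_kronecker,
      (hA _).eq, (hX _).eq]
  obtain ⟨t, ht, hpos⟩ := exists_pos_posDef_one_add_smul hH
  refine ⟨t, ht, ?_⟩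
  simpa only [evalAt_pencil, linearPencil, Matrix.one_kronecker_one, Matrix.kronecker_smul,
    ← Finset.smul_sum] using hpos

end Fock

/-! ### Cones of hermitian squares -/

section Separation

lemma isCompact_convexHull {V : Type*} [AddCommGroup V] [Module ℝ V] [TopologicalSpace V]
    [IsTopologicalAddGroup V] [ContinuousSMul ℝ V] [FiniteDimensional ℝ V] {T : Set V}
    (hT : IsCompact T) : IsCompact (convexHull ℝ T) := by
  let combo (k : ℕ) (q : (Fin k → ℝ) × (Fin k → V)) : V := ∑ i, q.1 i • q.2 i
  have hcompact (k : ℕ) :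
      IsCompact (combo k '' (stdSimplex ℝ (Fin k) ×ˢ Set.univ.pi fun _ => T)) :=
    ((isCompact_stdSimplex ℝ _).prod (isCompact_univ_pi fun _ => hT)).image (by fun_prop)
  convert (Set.finite_Iic (Module.finrank ℝ V + 1)).isCompact_biUnion fun k _ => hcompact k using 1
  apply Set.Subset.antisymm
  · intro x hx
    obtain ⟨ι, _, z, w, hzT, hz, hw, hw1, hx⟩ := eq_pos_convex_span_of_mem_convexHull hx
    let σ := Fintype.equivFin ι
    refine Set.mem_biUnion (x := Fintype.card ι) (hz.card_le_finrank_succ.trans ?_)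
      ⟨(w ∘ σ.symm, z ∘ σ.symm), ⟨⟨fun i => (hw _).le, ?_⟩, fun i _ => hzT ⟨_, rfl⟩⟩, ?_⟩
    · gcongr
      exact Submodule.finrank_le _
    · exact (Equiv.sum_comp σ.symm w).trans hw1
    · exact (Equiv.sum_comp σ.symm fun i => w i • z i).trans hx
  · rintro x hx
    simp only [Set.mem_iUnion] at hx
    obtain ⟨k, -, ⟨w, z⟩, ⟨hw, hz⟩, rfl⟩ := hx
    exact (convex_convexHull ℝ T).sum_mem (fun i _ => hw.1 i) hw.2
      fun i _ => subset_convexHull ℝ T (hz i trivial)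

lemma exists_pos_of_notMem_hull {V : Type*} [NormedAddCommGroup V] [NormedSpace ℝ V]
    [FiniteDimensional ℝ V] {T : Set V} (hT : IsCompact T) {ℓ : V →ₗ[ℝ] ℝ} (hℓ : ∀ t ∈ T, 0 < ℓ t)
    {x : V} (hx : 0 < ℓ x) (hxT : x ∉ PointedCone.hull ℝ T) :
    ∃ g : V →ₗ[ℝ] ℝ, g x < 0 ∧ ∀ t ∈ T, 0 < g t := by
  let T₁ := (fun t => (ℓ t)⁻¹ • t) '' T
  have hℓc : Continuous ℓ := ℓ.continuous_of_finiteDimensional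
  have hT₁ : IsCompact T₁ := hT.image_of_continuousOn <|
    (hℓc.continuousOn.inv₀ fun t ht => (hℓ t ht).ne').smul continuousOn_id
  have hT₁T : T₁ ⊆ PointedCone.hull ℝ T := Set.image_subset_iff.2 fun t ht =>
    PointedCone.smul_mem _ (inv_nonneg.2 (hℓ t ht).le) (Submodule.subset_span ht)
  have hnot : (ℓ x)⁻¹ • x ∉ convexHull ℝ T₁ := fun h => hxT <| by
    have h' := PointedCone.smul_mem (PointedCone.hull ℝ T) hx.le
      (convexHull_min hT₁T (PointedCone.convex _) h)
    rwa [smul_inv_smul₀ hx.ne'] at h'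
  obtain ⟨g, u, hg, hgT⟩ := geometric_hahn_banach_point_closed (convex_convexHull ℝ T₁)
    (isCompact_convexHull hT₁).isClosed hnot
  refine ⟨g - u • ℓ, ?_, fun t ht => ?_⟩
  · rw [map_smul, smul_eq_mul, inv_mul_lt_iff₀ hx] at hg
    simpa [mul_comm u] using hg
  · have hgt := hgT _ (subset_convexHull ℝ T₁ ⟨t, ht, rfl⟩)
    rw [map_smul, smul_eq_mul, lt_inv_mul_iff₀ (hℓ t ht)] at hgt
    simpa [mul_comm u] using hgt

variable {I J : Type*} [Fintype I]

lemma conjTranspose_mul_mul_apply (Z : Matrix I J ℂ) (H : Matrix I I ℂ) (i j : J) :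
    (Zᴴ * H * Z) i j = star (Z.col i) ⬝ᵥ (H *ᵥ Z.col j) := by
  rw [Matrix.mul_assoc, Matrix.mul_apply]
  rfl

/-- The convex cone generated by the weighted hermitian squares `Zᴴ * H * Z` with `Z ∈ S`. -/
noncomputable def squareCone (S : Submodule ℂ (Matrix I J ℂ)) (H : Matrix I I ℂ) :
    PointedCone ℝ (Matrix J J ℂ) :=
  PointedCone.hull ℝ ((fun Z : Matrix I J ℂ => Zᴴ * H * Z) '' S)

lemma exists_sum_of_mem_squareCone {S : Submodule ℂ (Matrix I J ℂ)} {H : Matrix I I ℂ}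
    {F : Matrix J J ℂ} (hF : F ∈ squareCone S H) :
    ∃ (N : ℕ) (Z : Fin N → Matrix I J ℂ), (∀ i, Z i ∈ S) ∧ F = ∑ i, (Z i)ᴴ * H * Z i := by
  obtain ⟨N, c, q, rfl⟩ := Submodule.mem_span_set'.1 hF
  choose Z hZS hZ using fun i => (q i).2
  refine ⟨N, fun i => √(c i : ℝ) • Z i, fun i => S.smul_of_tower_mem _ (hZS i), ?_⟩
  refine Finset.sum_congr rfl fun i _ => ?_
  rw [← hZ i, Matrix.conjTranspose_smul, star_trivial, Matrix.smul_mul, Matrix.smul_mul,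
    Matrix.mul_smul, smul_smul, Real.mul_self_sqrt (c i).2]
  rfl

lemma trace_conjTranspose_mul_mul_pos [Fintype J] {H : Matrix I I ℂ} (hH : H.PosDef)
    {Z : Matrix I J ℂ} (hZ : Z ≠ 0) : 0 < (Zᴴ * H * Z).trace := by
  obtain ⟨j, hj⟩ : ∃ j, Z.col j ≠ 0 := by
    by_contra! h
    exact hZ (Matrix.ext fun i j => congr_fun (h j) i)
  refine Finset.sum_pos' (fun j _ => (hH.posSemidef.conjTranspose_mul_mul_same Z).diag_nonneg)
    ⟨j, Finset.mem_univ j, ?_⟩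
  rw [Matrix.diag_apply, conjTranspose_mul_mul_apply]
  exact hH.dotProduct_mulVec_pos hj

open scoped Matrix.Norms.Frobenius in
lemma exists_pos_on_squares_of_notMem_squareCone [Finite J] {S : Submodule ℂ (Matrix I J ℂ)}
    {H : Matrix I I ℂ} (hH : H.PosDef) {F : Matrix J J ℂ} (hF : F.PosSemidef)
    (hFS : F ∉ squareCone S H) :
    ∃ g : Matrix J J ℂ →ₗ[ℝ] ℝ, g F < 0 ∧ ∀ Z ∈ S, Z ≠ 0 → 0 < g (Zᴴ * H * Z) := by
  cases nonempty_fintype J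
  let T := (fun Z => Zᴴ * H * Z) '' (Metric.sphere (0 : Matrix I J ℂ) 1 ∩ S)
  have hT : IsCompact T :=
    ((isCompact_sphere _ _).inter_right S.closed_of_finiteDimensional).image (by fun_prop)
  let ℓ : Matrix J J ℂ →ₗ[ℝ] ℝ := Complex.reLm ∘ₗ Matrix.traceLinearMap J ℝ ℂ
  have hℓ : ∀ t ∈ T, 0 < ℓ t := by
    rintro _ ⟨Z, ⟨hZ, -⟩, rfl⟩
    exact (Complex.pos_iff.1 (trace_conjTranspose_mul_mul_pos hH
      (ne_zero_of_mem_unit_sphere ⟨Z, hZ⟩))).1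
  have hℓF : 0 < ℓ F := by
    have hF0 : F ≠ 0 := fun h => hFS (h ▸ zero_mem _)
    exact (Complex.pos_iff.1 (hF.trace_nonneg.lt_of_ne' (mt hF.trace_eq_zero_iff.1 hF0))).1
  obtain ⟨g, hgF, hgT⟩ := exists_pos_of_notMem_hull hT hℓ hℓF fun h =>
    hFS (Submodule.span_mono (Set.image_mono Set.inter_subset_right) h)
  refine ⟨g, hgF, fun Z hZ hZ0 => ?_⟩
  have hnorm : 0 < ‖Z‖ := norm_pos_iff.2 hZ0
  have hZ1 := hgT _ ⟨‖Z‖⁻¹ • Z, ⟨by simp [norm_smul, hnorm.ne'], S.smul_of_tower_mem _ hZ⟩, rfl⟩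
  simpa only [Matrix.conjTranspose_smul, star_trivial, Matrix.smul_mul, Matrix.mul_smul, map_smul,
    smul_eq_mul, inv_pos.2 hnorm, mul_pos_iff_of_pos_left] using hZ1

lemma exists_hermitian_extension {V : Type*} [AddCommGroup V] [Module ℂ V] [StarAddMonoid V]
    [StarModule ℂ V] (g : V →ₗ[ℝ] ℝ) : ∃ Λ : V →ₗ[ℂ] ℂ,
      (∀ x, Λ (star x) = starRingEnd ℂ (Λ x)) ∧ ∀ x, IsSelfAdjoint x → Λ x = g x := by
  let Λ : V →ₗ[ℂ] ℂ :=
    Module.Dual.extendRCLike (g ∘ₗ (selfAdjoint.submodule ℝ V).subtype ∘ₗ realPart)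
  have hΛ (x : V) (hx : IsSelfAdjoint x) : Λ x = g x := by
    change (g (realPart x : V) : ℂ) - Complex.I * g (realPart (Complex.I • x) : V) = g x
    simp [realPart_I_smul, hx.coe_realPart, hx.imaginaryPart]
  refine ⟨Λ, fun x => ?_, hΛ⟩
  have hre := hΛ _ (realPart x).2
  have him := hΛ _ (imaginaryPart x).2
  conv_lhs => rw [← realPart_add_I_smul_imaginaryPart x]
  conv_rhs => rw [← realPart_add_I_smul_imaginaryPart x]
  simp [hre, him]

end Separation

/-! ### The truncated GNS construction -/

section GNS

variable {n δ : ℕ} {I R : Type*}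

/-- The matrix over `ℂ⟨x⟩` of degree at most `δ` with the given coefficients in the words. -/
noncomputable def ofCoeff (c : R × (I × Words n δ) → ℂ) : Matrix R I (FreeAlg n) :=
  .of fun a i => ∑ v : Words n δ, c (a, i, v) • word v.1

lemma matDegLE_ofCoeff (c : R × (I × Words n δ) → ℂ) : matDegLE (ofCoeff c) δ :=
  fun _ _ => sum_mem fun v _ => Submodule.smul_mem _ _ (word_mem_degLE v.2)

lemma ofCoeff_ne_zero {c : R × (I × Words n δ) → ℂ} (hc : c ≠ 0) : ofCoeff c ≠ 0 := by
  contrapose! hc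
  have hli : LinearIndependent ℂ fun v : Words n δ => word v.1 := by
    simpa only [coe_wordBasis] using!
      (wordBasis n).linearIndependent.comp Subtype.val Subtype.val_injective
  ext ⟨a, i, v⟩
  exact Fintype.linearIndependent_iff.1 hli (fun v => c (a, i, v)) congr($hc a i) v

variable [DecidableEq I]

section Squares

variable [Fintype I] [Fintype R] [DecidableEq R]

lemma ofCoeff_eq_sum (c : R × (I × Words n δ) → ℂ) :
    ofCoeff c = ∑ p, c p • Matrix.single p.1 p.2.1 (word p.2.2.1) := by
  ext a i
  simp [ofCoeff, Matrix.sum_apply, Fintype.sum_prod_type, Matrix.single_apply, ite_and]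

lemma adjM_ofCoeff (c : R × (I × Words n δ) → ℂ) : adjM (ofCoeff c) =
    ∑ p, starRingEnd ℂ (c p) • Matrix.single p.2.1 p.1 (nstar (word p.2.2.1)) := by
  ext i a
  simp [adjM, ofCoeff, Matrix.sum_apply, Fintype.sum_prod_type, Matrix.single_apply, ite_and,
    nstar_sum, nstar_smul]

end Squares

variable {Λ : Matrix I I (FreeAlg n) →ₗ[ℂ] ℂ}

/-- The moment matrix of `a` for the functional `Λ`, that is, the matrix of the sesquilinear form
`(p, q) ↦ Λ(p* a q)` on row vectors of degree at most `δ` in the basis of words. -/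
noncomputable def momentMatrix (Λ : Matrix I I (FreeAlg n) →ₗ[ℂ] ℂ) (δ : ℕ) :
    FreeAlg n →ₗ[ℂ] Matrix (I × Words n δ) (I × Words n δ) ℂ where
  toFun a := .of fun p q => Λ (.single p.1 q.1 (nstar (word p.2.1) * a * word q.2.1))
  map_add' a b := by ext; simp [mul_add, add_mul, Matrix.single_add]
  map_smul' c a := by ext; simp [← Matrix.smul_single]

lemma momentMatrix_apply (a : FreeAlg n) (p q : I × Words n δ) : momentMatrix Λ δ a p q =
    Λ (.single p.1 q.1 (nstar (word p.2.1) * a * word q.2.1)) :=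
  rfl

lemma momentMatrix_nstar (hΛ : ∀ f, Λ (adjM f) = starRingEnd ℂ (Λ f)) (a : FreeAlg n) :
    momentMatrix Λ δ (nstar a) = (momentMatrix Λ δ a)ᴴ := by
  ext p q
  rw [Matrix.conjTranspose_apply, momentMatrix_apply, momentMatrix_apply, ← starRingEnd_apply, ← hΛ]
  congr 1
  ext i j
  simp only [adjM, Matrix.single_apply, apply_ite nstar, nstar_zero, nstar_mul, nstar_nstar,
    mul_assoc, and_comm]

lemma isHermitian_momentMatrix (hΛ : ∀ f, Λ (adjM f) = starRingEnd ℂ (Λ f)) {a : FreeAlg n}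
    (ha : nstar a = a) : (momentMatrix Λ δ a).IsHermitian := by
  rw [Matrix.IsHermitian, ← momentMatrix_nstar hΛ, ha]

section LocalizingMatrix

variable [Fintype R]

lemma star_dotProduct_blockMap_momentMatrix_mulVec [Fintype I] (P : Matrix R R (FreeAlg n))
    (c : R × (I × Words n δ) → ℂ) :
    star c ⬝ᵥ (blockMap (momentMatrix Λ δ) P *ᵥ c) = Λ (adjM (ofCoeff c) * P * ofCoeff c) := by
  classical
  rw [adjM_ofCoeff, ofCoeff_eq_sum]
  simp only [Matrix.sum_mul, Matrix.mul_sum, map_sum, Matrix.smul_mul, Matrix.mul_smul, map_smul,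
    Matrix.single_mul_mul_single, dotProduct, Matrix.mulVec, Finset.mul_sum, smul_eq_mul]
  rw [Finset.sum_comm]
  refine Finset.sum_congr rfl fun q _ => Finset.sum_congr rfl fun p _ => ?_
  rw [mul_comm (blockMap _ _ _ _), mul_left_comm]
  rfl

lemma posDef_blockMap_momentMatrix [Finite I] (hΛ : ∀ f, Λ (adjM f) = starRingEnd ℂ (Λ f))
    {P : Matrix R R (FreeAlg n)} (hP : adjM P = P)
    (hpos : ∀ w : Matrix R I (FreeAlg n), matDegLE w δ → w ≠ 0 → 0 < Λ (adjM w * P * w)) :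
    (blockMap (momentMatrix Λ δ) P).PosDef := by
  cases nonempty_fintype I
  refine .of_dotProduct_mulVec_pos ?_ fun c hc => ?_
  · rw [Matrix.IsHermitian, ← blockMap_adjM (momentMatrix_nstar hΛ), hP]
  · rw [star_dotProduct_blockMap_momentMatrix_mulVec]
    exact hpos _ (matDegLE_ofCoeff c) (ofCoeff_ne_zero hc)

end LocalizingMatrix

variable [Fintype I]

/-- The truncated GNS tuple: compressed multiplication by the generators on row vectors of degree
at most `δ`, in coordinates where the Gram matrix `Cᴴ * C = momentMatrix Λ δ 1` becomes the
identity. The column `C.col (i, w)` represents the word `w` in position `i`. -/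
noncomputable def gnsTuple (Λ : Matrix I I (FreeAlg n) →ₗ[ℂ] ℂ)
    (C : Matrix (I × Words n δ) (I × Words n δ) ℂ) (j : Fin n) :
    Matrix (I × Words n δ) (I × Words n δ) ℂ :=
  (C⁻¹)ᴴ * momentMatrix Λ δ (FreeAlgebra.ι ℂ j) * C⁻¹

lemma isHermitian_gnsTuple (hΛ : ∀ f, Λ (adjM f) = starRingEnd ℂ (Λ f))
    (C : Matrix (I × Words n δ) (I × Words n δ) ℂ) (j : Fin n) : (gnsTuple Λ C j).IsHermitian :=
  Matrix.isHermitian_conjTranspose_mul_mul _ (isHermitian_momentMatrix hΛ (nstar_ι j))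

section Columns

variable {C : Matrix (I × Words n δ) (I × Words n δ) ℂ}

lemma conjTranspose_mul_gnsTuple_mul (hC : IsUnit C) (j : Fin n) :
    Cᴴ * gnsTuple Λ C j * C = momentMatrix Λ δ (FreeAlgebra.ι ℂ j) := by
  have hdet := (Matrix.isUnit_iff_isUnit_det C).1 hC
  rw [gnsTuple, Matrix.mul_assoc, Matrix.mul_assoc, Matrix.nonsing_inv_mul C hdet, Matrix.mul_one,
    ← Matrix.mul_assoc, ← Matrix.conjTranspose_mul, Matrix.nonsing_inv_mul C hdet,
    Matrix.conjTranspose_one, Matrix.one_mul]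

lemma gnsTuple_mulVec_col (hC : IsUnit C) (hCG : Cᴴ * C = momentMatrix Λ δ 1) (k : Fin n) (j : I)
    {v : List (Fin n)} (hv : (k :: v).length ≤ δ) :
    gnsTuple Λ C k *ᵥ C.col (j, ⟨v, (Nat.le_succ _).trans hv⟩) = C.col (j, ⟨k :: v, hv⟩) := by
  have hinj : Function.Injective (Cᴴ).mulVec :=
    Matrix.mulVec_injective_of_isUnit ((Matrix.isUnit_conjTranspose C).2 hC)
  apply hinj
  ext p
  change (Cᴴ *ᵥ (gnsTuple Λ C k *ᵥ _)) p = (Cᴴ * C) p (j, ⟨k :: v, hv⟩)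
  rw [Matrix.mulVec_mulVec]
  change (Cᴴ * gnsTuple Λ C k * C) p (j, ⟨v, _⟩) = _
  rw [conjTranspose_mul_gnsTuple_mul hC, hCG, momentMatrix_apply, momentMatrix_apply, word_cons,
    mul_one, mul_assoc]

lemma lift_gnsTuple_word_mulVec_col (hC : IsUnit C) (hCG : Cᴴ * C = momentMatrix Λ δ 1) (j : I)
    {w : List (Fin n)} (hw : w.length ≤ δ) :
    FreeAlgebra.lift ℂ (gnsTuple Λ C) (word w) *ᵥ C.col (j, emptyWord) = C.col (j, ⟨w, hw⟩) := by
  induction w with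
  | nil => rw [word_nil, map_one, Matrix.one_mulVec]; rfl
  | cons k v ih =>
    rw [word_cons, map_mul, FreeAlgebra.lift_ι_apply, ← Matrix.mulVec_mulVec,
      ih ((Nat.le_succ _).trans hw), gnsTuple_mulVec_col hC hCG]

lemma star_col_dotProduct_lift_gnsTuple_word_mulVec_col
    (hΛ : ∀ f, Λ (adjM f) = starRingEnd ℂ (Λ f)) (hC : IsUnit C)
    (hCG : Cᴴ * C = momentMatrix Λ δ 1) (i j : I) {w : List (Fin n)}
    (hw : w.length ≤ 2 * δ + 1) :
    star (C.col (i, emptyWord)) ⬝ᵥ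
        (FreeAlgebra.lift ℂ (gnsTuple Λ C) (word w) *ᵥ C.col (j, emptyWord)) =
      Λ (.single i j (word w)) := by
  obtain ⟨u, v, rfl, hu, hv⟩ : ∃ u v, w = u.reverse ++ v ∧ u.length ≤ δ ∧ v.length ≤ δ + 1 :=
    ⟨(w.take δ).reverse, w.drop δ, by simp, by simp, by simp; omega⟩
  have hleft : star (C.col (i, emptyWord)) ᵥ* FreeAlgebra.lift ℂ (gnsTuple Λ C) (word u.reverse) =
      star (C.col (i, ⟨u, hu⟩)) := by
    rw [← nstar_word, lift_nstar (isHermitian_gnsTuple hΛ C), ← Matrix.star_mulVec,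
      lift_gnsTuple_word_mulVec_col hC hCG i hu]
  rw [word_append, map_mul, ← Matrix.mulVec_mulVec, Matrix.dotProduct_mulVec, hleft]
  rcases v with _ | ⟨k, v⟩
  · rw [lift_gnsTuple_word_mulVec_col hC hCG j (w := []) (Nat.zero_le δ)]
    change (Cᴴ * C) (i, ⟨u, hu⟩) (j, ⟨[], _⟩) = _
    rw [hCG, momentMatrix_apply, nstar_word, mul_one]
  · rw [word_cons, map_mul, ← Matrix.mulVec_mulVec, FreeAlgebra.lift_ι_apply,
      lift_gnsTuple_word_mulVec_col hC hCG j (Nat.le_of_succ_le_succ hv),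
      ← conjTranspose_mul_mul_apply, conjTranspose_mul_gnsTuple_mul hC, momentMatrix_apply,
      nstar_word, mul_assoc]

lemma star_col_dotProduct_lift_gnsTuple_mulVec_col (hΛ : ∀ f, Λ (adjM f) = starRingEnd ℂ (Λ f))
    (hC : IsUnit C) (hCG : Cᴴ * C = momentMatrix Λ δ 1) (i j : I) {a : FreeAlg n}
    (ha : a ∈ degLE n (2 * δ + 1)) :
    star (C.col (i, emptyWord)) ⬝ᵥ (FreeAlgebra.lift ℂ (gnsTuple Λ C) a *ᵥ C.col (j, emptyWord)) =
      Λ (.single i j a) := by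
  induction ha using Submodule.span_induction with
  | mem a ha =>
    obtain ⟨w, hw, rfl⟩ := ha
    exact star_col_dotProduct_lift_gnsTuple_word_mulVec_col hΛ hC hCG i j hw
  | zero => simp
  | add a b _ _ ha hb => rw [map_add, Matrix.add_mulVec, dotProduct_add, ha, hb,
      Matrix.single_add, map_add]
  | smul c a _ ha => rw [map_smul, Matrix.smul_mulVec, dotProduct_smul, ha, ← Matrix.smul_single,
      map_smul]

lemma star_dotProduct_evalAt_gnsTuple_mulVec (hΛ : ∀ f, Λ (adjM f) = starRingEnd ℂ (Λ f))
    (hC : IsUnit C) (hCG : Cᴴ * C = momentMatrix Λ δ 1) {f : Matrix I I (FreeAlg n)}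
    (hf : matDegLE f (2 * δ + 1)) :
    star (fun p : I × (I × Words n δ) => C p.2 (p.1, emptyWord)) ⬝ᵥ
      (evalAt (gnsTuple Λ C) f *ᵥ fun p => C p.2 (p.1, emptyWord)) = Λ f := by
  conv_rhs => rw [Matrix.matrix_eq_sum_single f]
  simp only [map_sum, ← star_col_dotProduct_lift_gnsTuple_mulVec_col hΛ hC hCG _ _ (hf _ _)]
  simp only [dotProduct, Matrix.mulVec, Fintype.sum_prod_type (α₁ := I) (α₂ := I × Words n δ),
    Finset.mul_sum]
  refine Finset.sum_congr rfl fun i _ => ?_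
  rw [Finset.sum_comm]
  rfl

end Columns

variable {E : Type*} [Fintype E] [DecidableEq E] {A : Fin n → Matrix E E ℂ}

open scoped MatrixOrder Matrix.Norms.L2Operator in
theorem exists_tuple_dotProduct_evalAt_mulVec_eq (hΛ : ∀ f, Λ (adjM f) = starRingEnd ℂ (Λ f))
    (hA : ∀ j, (A j).IsHermitian)
    (hpos : ∀ w : Matrix (I ⊕ E) I (FreeAlg n), matDegLE w δ → w ≠ 0 →
      0 < Λ (adjM w * pencil (augment I A) * w)) :
    ∃ X : Fin n → Matrix (I × Words n δ) (I × Words n δ) ℂ, (∀ j, (X j).IsHermitian) ∧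
      (evalAt X (pencil A)).PosSemidef ∧ ∃ ξ : I × (I × Words n δ) → ℂ,
        ∀ f, matDegLE f (2 * δ + 1) → star ξ ⬝ᵥ (evalAt X f *ᵥ ξ) = Λ f := by
  have hLoc : (linearPencil (augment I A) (momentMatrix Λ δ 1)
      fun j => momentMatrix Λ δ (FreeAlgebra.ι ℂ j)).PosDef := by
    rw [← blockMap_pencil]
    exact posDef_blockMap_momentMatrix hΛ (adjM_pencil (isHermitian_augment I hA)) hpos
  have hG : (momentMatrix Λ δ 1).PosDef := by
    cases isEmpty_or_nonempty I with
    | inl _ =>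
      exact .of_dotProduct_mulVec_pos (Subsingleton.elim _ _) fun c hc =>
        (hc (Subsingleton.elim c 0)).elim
    | inr hI =>
      rw [← linearPencil_augment_inl (A := A) (momentMatrix Λ δ 1)
        (fun j => momentMatrix Λ δ (FreeAlgebra.ι ℂ j)) hI.some]
      exact hLoc.submatrix (Prod.mk_right_injective _)
  obtain ⟨C, hC, hCG⟩ :=
    CStarAlgebra.isStrictlyPositive_iff_eq_star_mul_self.1 hG.isStrictlyPositive
  refine ⟨gnsTuple Λ C, isHermitian_gnsTuple hΛ C, ?_, _,
    fun f hf => star_dotProduct_evalAt_gnsTuple_mulVec hΛ hC hCG.symm hf⟩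
  have hone : (C⁻¹)ᴴ * momentMatrix Λ δ 1 * C⁻¹ = 1 := by
    have hdet := (Matrix.isUnit_iff_isUnit_det C).1 hC
    rw [hCG, Matrix.star_eq_conjTranspose, ← Matrix.mul_assoc, ← Matrix.conjTranspose_mul,
      Matrix.mul_nonsing_inv C hdet, Matrix.conjTranspose_one, Matrix.one_mul,
      Matrix.mul_nonsing_inv C hdet]
  have hconj : evalAt (gnsTuple Λ C) (pencil A) =
      ((1 : Matrix E E ℂ) ⊗ₖ C⁻¹)ᴴ * linearPencil A (momentMatrix Λ δ 1)
        (fun j => momentMatrix Λ δ (FreeAlgebra.ι ℂ j)) * ((1 : Matrix E E ℂ) ⊗ₖ C⁻¹) := by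
    rw [evalAt_pencil, ← linearPencil_conj, hone]
    rfl
  rw [hconj, ← linearPencil_augment_inr (I := I)]
  exact (hLoc.posSemidef.submatrix _).conjTranspose_mul_mul_same _

end GNS

/-! ### Certificates -/

section Certificates

variable {n : ℕ} {I E : Type*}

lemma posSemidef_evalAt_sum {K : Type*} [Fintype I] [Fintype E] [Fintype K] [DecidableEq K]
    {X : Fin n → Matrix K K ℂ} (hX : ∀ j, (X j).IsHermitian) {P : Matrix E E (FreeAlg n)}
    (hP : (evalAt X P).PosSemidef) {M N : ℕ} (s : Fin M → Matrix I I (FreeAlg n))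
    (v : Fin N → Matrix E I (FreeAlg n)) :
    (evalAt X (∑ i, adjM (s i) * s i + ∑ j, adjM (v j) * P * v j)).PosSemidef := by
  simp only [map_add, map_sum, evalAt_mul, evalAt_adjM hX]
  exact .add (Matrix.posSemidef_sum _ fun i _ => Matrix.posSemidef_conjTranspose_mul_self _)
    (Matrix.posSemidef_sum _ fun j _ => hP.conjTranspose_mul_mul_same _)

variable [Fintype E] {δ : ℕ} {f : Matrix I I (FreeAlg n)}

lemma exists_functional_of_evalAt_notMem_squareCone {K : Type*} [Finite I] [Fintype K]
    [DecidableEq K] {Y : Fin n → Matrix K K ℂ} (hY : ∀ j, (Y j).IsHermitian)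
    {P : Matrix E E (FreeAlg n)} (hP : (evalAt Y P).PosDef)
    (hinj : Set.InjOn (evalAt Y) {w : Matrix E I (FreeAlg n) | matDegLE w δ})
    (hf : (evalAt Y f).PosSemidef)
    (hmem : evalAt Y f ∉ squareCone ((degLE n δ).matrix.map (evalAt Y)) (evalAt Y P)) :
    ∃ Λ : Matrix I I (FreeAlg n) →ₗ[ℂ] ℂ, (∀ g, Λ (adjM g) = starRingEnd ℂ (Λ g)) ∧ Λ f < 0 ∧
      ∀ w : Matrix E I (FreeAlg n), matDegLE w δ → w ≠ 0 → 0 < Λ (adjM w * P * w) := by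
  obtain ⟨g, hgf, hg⟩ := exists_pos_on_squares_of_notMem_squareCone hP hf hmem
  obtain ⟨Λ, hΛ, hΛg⟩ := exists_hermitian_extension g
  refine ⟨Λ ∘ₗ evalAt Y, fun h => ?_, ?_, fun w hw hw0 => ?_⟩
  · rw [LinearMap.comp_apply, evalAt_adjM hY]
    exact hΛ _
  · rw [LinearMap.comp_apply, hΛg _ hf.isHermitian]
    exact_mod_cast hgf
  · have hZ : evalAt Y w ≠ 0 := fun h =>
      hw0 (hinj hw (fun _ _ => zero_mem _) (h.trans (map_zero _).symm))
    rw [LinearMap.comp_apply, evalAt_mul, evalAt_mul, evalAt_adjM hY,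
      hΛg _ (Matrix.isHermitian_conjTranspose_mul_mul _ hP.isHermitian)]
    exact_mod_cast hg _ ⟨w, hw, rfl⟩ hZ

lemma exists_sum_of_evalAt_mem_squareCone {K : Type*} [Fintype K] [DecidableEq K]
    {Y : Fin n → Matrix K K ℂ} (hY : ∀ j, (Y j).IsHermitian) {P : Matrix E E (FreeAlg n)}
    (hP : matDegLE P 1)
    (hinj : Set.InjOn (evalAt Y) {g : Matrix I I (FreeAlg n) | matDegLE g (2 * δ + 1)})
    (hf : matDegLE f (2 * δ + 1))
    (hmem : evalAt Y f ∈ squareCone ((degLE n δ).matrix.map (evalAt Y)) (evalAt Y P)) :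
    ∃ (N : ℕ) (w : Fin N → Matrix E I (FreeAlg n)), (∀ i, matDegLE (w i) δ) ∧
      f = ∑ i, adjM (w i) * P * w i := by
  obtain ⟨N, Z, hZ, hfZ⟩ := exists_sum_of_mem_squareCone hmem
  choose w hw hwZ using hZ
  have hdeg (i : Fin N) : matDegLE (adjM (w i) * P * w i) (2 * δ + 1) :=
    (((matDegLE.adjM (hw i)).mul hP).mul (hw i)).mono (by omega)
  refine ⟨N, w, hw, hinj hf (fun a b => ?_) ?_⟩
  · rw [Matrix.sum_apply]
    exact sum_mem fun i _ => hdeg i a b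
  · simp only [hfZ, map_sum, evalAt_mul, evalAt_adjM hY, hwZ]

variable [Fintype I] [DecidableEq I] [DecidableEq E] {A : Fin n → Matrix E E ℂ}

theorem exists_certificate_of_posSemidef (hA : ∀ j, (A j).IsHermitian)
    (hf : matDegLE f (2 * δ + 1))
    (hpos : ∀ (k : ℕ) (X : Fin n → Matrix (Fin k) (Fin k) ℂ), (∀ j, (X j).IsHermitian) →
      (evalAt X (pencil A)).PosSemidef → (evalAt X f).PosSemidef) :
    ∃ (N : ℕ) (w : Fin N → Matrix (I ⊕ E) I (FreeAlg n)), (∀ i, matDegLE (w i) δ) ∧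
      f = ∑ i, adjM (w i) * pencil (augment I A) * w i := by
  have hA' := isHermitian_augment I hA
  obtain ⟨t, ht, hYpos⟩ := exists_pos_posDef_evalAt_smul_pencil hA'
    (isHermitian_fockTuple (n := n) (m := 2 * δ + 1))
  set Y := fun j => (t : ℂ) • fockTuple n (2 * δ + 1) j
  have hY (j : Fin n) : (Y j).IsHermitian := (isHermitian_fockTuple j).smul (Complex.conj_ofReal t)
  have ht₀ : (t : ℂ) ≠ 0 := Complex.ofReal_ne_zero.2 ht.ne'
  by_contra hcert
  have hfY : (evalAt Y f).PosSemidef := by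
    refine posSemidef_evalAt_of_forall_fin hpos hY ?_
    rw [evalAt_pencil, ← linearPencil_augment_inr (I := I), ← evalAt_pencil]
    exact hYpos.posSemidef.submatrix _
  obtain ⟨Λ, hΛ, hΛf, hΛpos⟩ := exists_functional_of_evalAt_notMem_squareCone (δ := δ) hY hYpos
    ((evalAt_smul_fockTuple_injOn ht₀ _ _).mono fun w hw => matDegLE.mono hw (by omega)) hfY
    fun hmem => hcert <| exists_sum_of_evalAt_mem_squareCone hY (matDegLE_pencil _)
      (evalAt_smul_fockTuple_injOn ht₀ I I) hf hmem
  obtain ⟨X, hX, hXL, ξ, hξ⟩ := exists_tuple_dotProduct_evalAt_mulVec_eq hΛ hA hΛpos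
  have hnonneg := (posSemidef_evalAt_of_forall_fin hpos hX hXL).dotProduct_mulVec_nonneg ξ
  rw [hξ f hf] at hnonneg
  exact hΛf.not_ge hnonneg

end Certificates

theorem convex_positivstellensatz_general {n δ : ℕ} {I E : Type*} [Fintype I]
    [Fintype E] [DecidableEq E] (f : Matrix I I (FreeAlg n)) (hf : matDegLE f (2 * δ + 1))
    (A : Fin n → Matrix E E ℂ) (hA : ∀ j, (A j).IsHermitian) :
    (∀ (k : ℕ) (X : Fin n → Matrix (Fin k) (Fin k) ℂ), (∀ j, (X j).IsHermitian) →
        (evalM (pencil A) X).PosSemidef → (evalM f X).PosSemidef) ↔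
      ∃ (M N : ℕ) (s : Fin M → Matrix I I (FreeAlg n)) (v : Fin N → Matrix E I (FreeAlg n)),
        (∀ i, matDegLE (s i) δ) ∧ (∀ j, matDegLE (v j) δ) ∧
        f = ∑ i, adjM (s i) * s i + ∑ j, adjM (v j) * pencil A * v j := by
  classical
  constructor
  · intro h
    obtain ⟨N, w, hw, rfl⟩ := exists_certificate_of_posSemidef hA hf h
    refine ⟨N, N, fun i => (w i).toRows₁, fun i => (w i).toRows₂, fun i a b => hw i (.inl a) b,
      fun i a b => hw i (.inr a) b, ?_⟩
    rw [← Finset.sum_add_distrib]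
    exact Finset.sum_congr rfl fun i _ => adjM_mul_pencil_augment_mul (w i)
  · rintro ⟨M, N, s, v, -, -, rfl⟩ k X hX hL
    exact posSemidef_evalAt_sum hX hL s v

/-- convex Positivstellensatz: `f ⪰ 0` on the free spectrahedron of the
monic hermitian pencil `L` iff `f = ∑ᵢ sᵢ*sᵢ + ∑ⱼ vⱼ*Lvⱼ` with all degrees at most
`⌊deg f / 2⌋`. -/
theorem convex_positivstellensatz {n d e : ℕ}
    (f : Matrix (Fin d) (Fin d) (FreeAlg n)) (hf : IsHermPoly f)
    (A : Fin n → Matrix (Fin e) (Fin e) ℂ) (hA : ∀ j, (A j).IsHermitian) :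
    (∀ (k : ℕ) (X : Fin n → Matrix (Fin k) (Fin k) ℂ), (∀ j, (X j).IsHermitian) →
        (monicK A X).PosSemidef → (evalM f X).PosSemidef) ↔
      (∃ (M N : ℕ) (s : Fin M → Matrix (Fin d) (Fin d) (FreeAlg n))
          (v : Fin N → Matrix (Fin e) (Fin d) (FreeAlg n)),
        (∀ i, matDegLE (s i) (matDeg f / 2)) ∧
        (∀ j, matDegLE (v j) (matDeg f / 2)) ∧
        f = ∑ i, adjM (s i) * s i + ∑ j, adjM (v j) * monicPoly A * v j) := by
  simp only [monicK_eq_evalM_pencil]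
  exact convex_positivstellensatz_general f ((matDegLE_matDeg f).mono (by omega)) A hA
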